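/- arXiv:2210.00785 — 2 statements merged into one kernel-verified Lean document; each statement's English description precedes it below -/
import Mathlib

section
/- Let k ≥ 1, let G₁,…,G_k ⊆ ℝ^d be finite sets, and let H ⊆ ℝ^d be a finite set with H ⊆ ⋃_{i=1}^k G_i and span(H) = span(G_i) for every i (in particular all spans coincide). Then (relint(cone(H)) ∪ {0}) + ∑_{i=1}^k (relint(cone(G_i)) ∪ {0}) = ∑_{i=1}^k (relint(cone(G_i)) ∪ {0}), where + denotes Minkowski sum. (Lemma 7, geometric form: a cycle whose support is covered by other cycles of the same span is redundant.) -/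
open Pointwise

/-- The convex cone of a finite set `G ⊆ ℝ^d`: all nonnegative combinations
of elements of `G`. -/
def coneF {d : ℕ} (G : Finset (Fin d → ℝ)) : Set (Fin d → ℝ) :=
  {x | ∃ a : (Fin d → ℝ) → ℝ, (∀ v ∈ G, 0 ≤ a v) ∧ x = ∑ v ∈ G, a v • v}

/-!
A point `x` of `relint D` stays in `D` after subtracting a small multiple of any vector of the
span of `D`. Subtract `ε • ∑ i, p i` with `p i ∈ relint (C i)`: what remains splits as `∑ i, c i`
with `c i ∈ C i`, so `x = ∑ i, (ε • p i + c i)`, and each summand lies in `relint (C i)` because the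
relative interior of a cone absorbs the cone. The same absorption lets the summands of `x` be added
to those of any point of `∑ i, (relint (C i) ∪ {0})`.
-/

open Filter Submodule Topology

theorem mem_intrinsicInterior_iff_mem_nhdsWithin {𝕜 V P : Type*} [Ring 𝕜] [AddCommGroup V]
    [Module 𝕜 V] [TopologicalSpace P] [AddTorsor V P] {s : Set P} {x : P} :
    x ∈ intrinsicInterior 𝕜 s ↔ x ∈ affineSpan 𝕜 s ∧ s ∈ 𝓝[affineSpan 𝕜 s] x := by
  simp only [mem_intrinsicInterior, mem_interior_iff_mem_nhds]
  constructor
  · rintro ⟨y, hy, rfl⟩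
    exact ⟨y.2, preimage_coe_mem_nhds_subtype.1 hy⟩
  · rintro ⟨hx, hs⟩
    exact ⟨⟨x, hx⟩, preimage_coe_mem_nhds_subtype.2 hs, rfl⟩

section OrderedRing

variable {R E : Type*} [Ring R] [PartialOrder R] [IsOrderedRing R] [AddCommGroup E] [Module R E]
  {C : PointedCone R E} {x y : E}

theorem coe_affineSpan_pointedCone (C : PointedCone R E) :
    (affineSpan R (C : Set E) : Set E) = span R (C : Set E) := by
  rw [← affineSpan_insert_zero, Set.insert_eq_of_mem C.zero_mem]

variable [TopologicalSpace E]

theorem mem_intrinsicInterior_pointedCone :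
    x ∈ intrinsicInterior R (C : Set E) ↔
      x ∈ span R (C : Set E) ∧ (C : Set E) ∈ 𝓝[span R (C : Set E)] x := by
  rw [mem_intrinsicInterior_iff_mem_nhdsWithin, ← SetLike.mem_coe, coe_affineSpan_pointedCone,
    SetLike.mem_coe]

theorem add_mem_intrinsicInterior_pointedCone [ContinuousSub E]
    (hx : x ∈ intrinsicInterior R (C : Set E)) (hy : y ∈ C) :
    x + y ∈ intrinsicInterior R (C : Set E) := by
  rw [mem_intrinsicInterior_pointedCone] at hx ⊢
  obtain ⟨hx_span, hx_nhds⟩ := hx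
  have hy_span : y ∈ span R (C : Set E) := subset_span hy
  refine ⟨add_mem hx_span hy_span, ?_⟩
  have hlim : Tendsto (· - y) (𝓝[span R (C : Set E)] (x + y)) (𝓝[span R (C : Set E)] x) := by
    have hmaps : Set.MapsTo (· - y) (span R (C : Set E) : Set E) (span R (C : Set E)) :=
      fun z hz ↦ sub_mem hz hy_span
    simpa using
      ((continuous_sub_right y).continuousWithinAt (x := x + y)).tendsto_nhdsWithin hmaps
  filter_upwards [hlim hx_nhds] with z hz
  simpa using C.add_mem hz hy

end OrderedRing

section OrderedField

variable {𝕜 E ι : Type*} [Field 𝕜] [LinearOrder 𝕜] [IsStrictOrderedRing 𝕜] [AddCommGroup E]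
  [Module 𝕜 E] [TopologicalSpace E] {C D : PointedCone 𝕜 E} {x y : E}

theorem smul_mem_intrinsicInterior_pointedCone [ContinuousConstSMul 𝕜 E]
    (hx : x ∈ intrinsicInterior 𝕜 (C : Set E)) {ε : 𝕜} (hε : 0 < ε) :
    ε • x ∈ intrinsicInterior 𝕜 (C : Set E) := by
  rw [mem_intrinsicInterior_pointedCone] at hx ⊢
  obtain ⟨hx_span, hx_nhds⟩ := hx
  refine ⟨smul_mem _ ε hx_span, ?_⟩
  have hlim : Tendsto (ε⁻¹ • ·) (𝓝[span 𝕜 (C : Set E)] (ε • x)) (𝓝[span 𝕜 (C : Set E)] x) := by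
    have hmaps : Set.MapsTo (ε⁻¹ • ·) (span 𝕜 (C : Set E) : Set E) (span 𝕜 (C : Set E)) :=
      fun z hz ↦ smul_mem _ _ hz
    simpa [smul_smul, hε.ne'] using
      ((continuous_const_smul ε⁻¹).continuousWithinAt (x := ε • x)).tendsto_nhdsWithin hmaps
  filter_upwards [hlim hx_nhds] with z hz
  simpa [hε.ne'] using C.smul_mem hε.le hz

variable [TopologicalSpace 𝕜] [OrderTopology 𝕜] [IsTopologicalAddGroup E] [ContinuousSMul 𝕜 E]

theorem exists_pos_sub_smul_mem_pointedCone (hx : x ∈ intrinsicInterior 𝕜 (C : Set E))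
    (hy : y ∈ span 𝕜 (C : Set E)) : ∃ ε : 𝕜, 0 < ε ∧ x - ε • y ∈ C := by
  obtain ⟨hx_span, hx_nhds⟩ := mem_intrinsicInterior_pointedCone.1 hx
  have hlim : Tendsto (fun ε : 𝕜 ↦ x - ε • y) (𝓝[>] 0) (𝓝[span 𝕜 (C : Set E)] x) := by
    have hcont : ContinuousWithinAt (fun ε : 𝕜 ↦ x - ε • y) (Set.Ioi 0) 0 :=
      Continuous.continuousWithinAt (by fun_prop)
    simpa using hcont.tendsto_nhdsWithin fun ε _ ↦ sub_mem hx_span (smul_mem _ ε hy)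
  exact ((eventually_mem_nhdsWithin (a := (0 : 𝕜))).and (hlim hx_nhds)).exists

theorem intrinsicInterior_subset_sum_intrinsicInterior [Fintype ι] {C : ι → PointedCone 𝕜 E}
    (hC : ∀ i, (intrinsicInterior 𝕜 (C i : Set E)).Nonempty) (hD : D ≤ ⨆ i, C i)
    (hspan : ∀ i, span 𝕜 (C i : Set E) ≤ span 𝕜 (D : Set E)) :
    intrinsicInterior 𝕜 (D : Set E) ⊆ ∑ i, intrinsicInterior 𝕜 (C i : Set E) := by
  intro x hx
  choose p hp using hC
  have hp_span : ∑ i, p i ∈ span 𝕜 (D : Set E) :=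
    sum_mem fun i _ ↦ hspan i (subset_span (intrinsicInterior_subset (hp i)))
  obtain ⟨ε, hε, hx_sub⟩ := exists_pos_sub_smul_mem_pointedCone hx hp_span
  obtain ⟨c, hc_sum⟩ : ∃ c : ∀ i, C i, ∑ i, (c i : E) = x - ε • ∑ i, p i := by
    simpa [← mem_iSup_finset_iff_exists_sum] using hD hx_sub
  refine (Set.mem_fintype_sum _ _).2 ⟨fun i ↦ ε • p i + c i, fun i ↦
    add_mem_intrinsicInterior_pointedCone (smul_mem_intrinsicInterior_pointedCone (hp i) hε)
      (c i).2, ?_⟩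
  rw [Finset.sum_add_distrib, hc_sum, ← Finset.smul_sum, add_sub_cancel]

theorem redundant_cycle_cone_general [Fintype ι] {C : ι → PointedCone 𝕜 E}
    (hC : ∀ i, (intrinsicInterior 𝕜 (C i : Set E)).Nonempty) (hD : D ≤ ⨆ i, C i)
    (hspan : ∀ i, span 𝕜 (C i : Set E) ≤ span 𝕜 (D : Set E)) :
    (intrinsicInterior 𝕜 (D : Set E) ∪ {0}) + ∑ i, (intrinsicInterior 𝕜 (C i : Set E) ∪ {0}) =
      ∑ i, (intrinsicInterior 𝕜 (C i : Set E) ∪ {0}) := by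
  refine Set.Subset.antisymm ?_ (Set.subset_add_right _ (Or.inr rfl))
  rintro _ ⟨x, hx | rfl, y, hy, rfl⟩
  · have hx_sum := intrinsicInterior_subset_sum_intrinsicInterior hC hD hspan hx
    obtain ⟨q, hq, rfl⟩ := (Set.mem_fintype_sum _ _).1 hx_sum
    obtain ⟨g, hg, rfl⟩ := (Set.mem_fintype_sum _ _).1 hy
    have hg_mem (i : ι) : g i ∈ C i :=
      (hg i).elim (fun h ↦ intrinsicInterior_subset h) fun h ↦ h ▸ (C i).zero_mem
    exact (Set.mem_fintype_sum _ _).2 ⟨q + g, fun i ↦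
      Or.inl (add_mem_intrinsicInterior_pointedCone (hq i) (hg_mem i)), Finset.sum_add_distrib⟩
  · simpa using hy

end OrderedField

theorem nonempty_intrinsicInterior_pointedCone {E : Type*} [NormedAddCommGroup E]
    [NormedSpace ℝ E] [FiniteDimensional ℝ E] (C : PointedCone ℝ E) :
    (intrinsicInterior ℝ (C : Set E)).Nonempty :=
  Set.Nonempty.intrinsicInterior C.convex ⟨0, C.zero_mem⟩

theorem coneF_eq_hull {d : ℕ} (G : Finset (Fin d → ℝ)) :
    coneF G = PointedCone.hull ℝ (G : Set (Fin d → ℝ)) := by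
  ext x
  constructor
  · rintro ⟨a, ha, rfl⟩
    exact sum_mem fun v hv ↦ PointedCone.smul_mem _ (ha v hv) (subset_span hv)
  · intro hx
    obtain ⟨a, -, rfl⟩ := mem_span_finset.1 hx
    exact ⟨fun v ↦ a v, fun v _ ↦ (a v).2, rfl⟩

/-- Lemma 7, geometric form. Let `k ≥ 1`, let
`G₁, …, G_k ⊆ ℝ^d` be finite sets and let `H ⊆ ⋃ᵢ Gᵢ` be a finite set with
`span(H) = span(Gᵢ)` for every `i`. Then adding the summand
`relint(cone(H)) ∪ {0}` to the iterated Minkowski sum of the sets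
`relint(cone(Gᵢ)) ∪ {0}` does not change it. -/
theorem redundant_cycle_cone (d k : ℕ) (hd : 1 ≤ d) (hk : 1 ≤ k)
    (G : Fin k → Finset (Fin d → ℝ)) (H : Finset (Fin d → ℝ))
    (hsub : (H : Set (Fin d → ℝ)) ⊆ ⋃ i : Fin k, (G i : Set (Fin d → ℝ)))
    (hspan : ∀ i : Fin k,
      Submodule.span ℝ (H : Set (Fin d → ℝ)) =
        Submodule.span ℝ (G i : Set (Fin d → ℝ))) :
    (intrinsicInterior ℝ (coneF H) ∪ {0}) +
        ∑ i : Fin k, (intrinsicInterior ℝ (coneF (G i)) ∪ {0}) =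
      ∑ i : Fin k, (intrinsicInterior ℝ (coneF (G i)) ∪ {0}) := by
  simp only [coneF_eq_hull]
  exact redundant_cycle_cone_general (fun _ ↦ nonempty_intrinsicInterior_pointedCone _)
    ((span_mono hsub).trans_eq (span_iUnion _))
    fun i ↦ by rw [span_span_of_tower, span_span_of_tower, hspan i]
end

section
/- Let V = (Q, T, ℓ) be a continuous VASS of dimension d, let x, y ∈ ℚ_{≥0}^d, and let π be a path with p(x) →^π q(y) in the nonnegative semantics. Then there exists a linear path scheme σ = π₀χ₁*π₁⋯χₙ*πₙ over V such that: n ≤ |T| + d; every π_i is a simple path; every χ_i is a simple cycle; and there exist y' ∈ ℚ_{≥0}^d and a path τ ∈ σ with ⟦π⟧ = ⟦τ⟧ and p(x) →^τ q(y') in the nonnegative semantics. (Lemma: short covering LPS for nonnegative runs.) -/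
open Pointwise

/-- A continuous VASS of dimension `d`: a finite set of states `Q`,
a finite set of transitions `T ⊆ Q × Q`, and a labelling of transitions
by vectors in `ℚ^d`. -/
structure CVASS (d : ℕ) where
  Q : Type
  [deceq : DecidableEq Q]
  [fin : Fintype Q]
  T : Finset (Q × Q)
  label : Q × Q → (Fin d → ℚ)

attribute [instance] CVASS.deceq CVASS.fin

namespace CVASS

variable {d : ℕ} (V : CVASS d)

/-- `V.PathFrom p π q` : the list of transitions `π` is a valid path of `V`
from state `p` to state `q`. -/
inductive PathFrom : V.Q → List (V.Q × V.Q) → V.Q → Prop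
  | nil (p : V.Q) : PathFrom p [] p
  | cons {p q r : V.Q} {rest : List (V.Q × V.Q)} :
      (p, q) ∈ V.T → PathFrom q rest r → PathFrom p ((p, q) :: rest) r

/-- `V.RunFrom p x π q y` : there is a run of `V` lifted from the path `π`,
starting in configuration `p(x)` and ending in configuration `q(y)`, where
each transition is scaled by some rational coefficient in `(0,1]`
(ℚ-semantics: counters may become negative). -/
inductive RunFrom : V.Q → (Fin d → ℚ) → List (V.Q × V.Q) → V.Q → (Fin d → ℚ) → Prop
  | nil (p : V.Q) (x : Fin d → ℚ) : RunFrom p x [] p x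
  | cons {p q r : V.Q} {x y : Fin d → ℚ} {α : ℚ} {rest : List (V.Q × V.Q)} :
      (p, q) ∈ V.T → 0 < α → α ≤ 1 →
      RunFrom q (x + α • V.label (p, q)) rest r y →
      RunFrom p x ((p, q) :: rest) r y

/-- `V.NNRunFrom p x π q y` : as `RunFrom`, but every configuration along the
run (including the first and the last one) must have nonnegative counters
(ℚ≥0-semantics). -/
inductive NNRunFrom : V.Q → (Fin d → ℚ) → List (V.Q × V.Q) → V.Q → (Fin d → ℚ) → Prop
  | nil (p : V.Q) (x : Fin d → ℚ) : (∀ i, 0 ≤ x i) → NNRunFrom p x [] p x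
  | cons {p q r : V.Q} {x y : Fin d → ℚ} {α : ℚ} {rest : List (V.Q × V.Q)} :
      (p, q) ∈ V.T → (∀ i, 0 ≤ x i) → 0 < α → α ≤ 1 →
      NNRunFrom q (x + α • V.label (p, q)) rest r y →
      NNRunFrom p x ((p, q) :: rest) r y

end CVASS

/-- The list of states visited by a path `π` starting at state `p`. -/
def pathStates {Q : Type} (p : Q) (π : List (Q × Q)) : List Q :=
  p :: π.map Prod.snd

/-- A path is simple if it visits no state twice. -/
def SimplePath {Q : Type} (p : Q) (π : List (Q × Q)) : Prop :=
  (pathStates p π).Nodup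

/-- A cycle is simple if it is nonempty and visits no state twice, except
that its first state equals its last state. -/
def SimpleCycle {Q : Type} (π : List (Q × Q)) : Prop :=
  π ≠ [] ∧ (π.map Prod.snd).Nodup

/-- The path `π₀ χ₁^{k₁} π₁ ⋯ χₙ^{kₙ} πₙ` determined by a linear path scheme
`π₀ χ₁* π₁ ⋯ χₙ* πₙ` (given by the paths `πs` and the cycles `χs`) and
exponents `ks`. -/
def lpsConcat {Q : Type} {n : ℕ} (πs : Fin (n + 1) → List (Q × Q))
    (χs : Fin n → List (Q × Q)) (ks : Fin n → ℕ) : List (Q × Q) :=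
  πs 0 ++ (List.ofFn fun i : Fin n =>
    (List.replicate (ks i) (χs i)).flatten ++ πs i.succ).flatten

/-!
Whether a nonnegative run can be lifted from a path only depends on signs: a transition can be fired
with a sufficiently small coefficient as soon as every counter it decreases is positive, and small
coefficients never bring a positive counter back to zero. Hence it only depends on the order in
which the transitions of the path occur for the first time.

Now read the path from left to right, cutting its last part short whenever that part closes a simple
cycle. A cycle without a new transition is deleted, which changes no first occurrence; a cycle with
a new transition is kept, as a cycle of the scheme traversed once. Each kept cycle accounts for its
own transition, so there are at most `|T|` of them.
-/

section ListLemmas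

variable {α : Type*} [BEq α] [LawfulBEq α]

theorem eraseDups_append_of_subset {u v : List α} (h : v ⊆ u) :
    (u ++ v).eraseDups = u.eraseDups := by
  have hv : v.removeAll u = [] := by
    simpa only [List.removeAll, List.filter_eq_nil_iff, Bool.not_eq_true', Bool.not_eq_false,
      List.elem_eq_contains, List.contains_iff_mem] using fun _ ha => h ha
  rw [List.eraseDups_append, hv, List.eraseDups_nil, List.append_nil]

theorem eraseDups_concat_of_notMem {u : List α} {a : α} (h : a ∉ u) :
    (u ++ [a]).eraseDups = u.eraseDups ++ [a] := by
  have ha : [a].removeAll u = [a] := by simp [List.removeAll, h]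
  rw [List.eraseDups_append, ha]
  rfl

theorem mem_iff_of_eraseDups_eq {u v : List α} (h : u.eraseDups = v.eraseDups) (a : α) :
    a ∈ u ↔ a ∈ v := by
  rw [← List.mem_eraseDups, h, List.mem_eraseDups]

theorem eraseDups_append_congr_left {u v : List α} (h : u.eraseDups = v.eraseDups) (w : List α) :
    (u ++ w).eraseDups = (v ++ w).eraseDups := by
  have hw : w.removeAll u = w.removeAll v := by
    refine List.filter_congr fun _ _ => ?_
    rw [Bool.eq_iff_iff]
    simp [mem_iff_of_eraseDups_eq h]
  rw [List.eraseDups_append, List.eraseDups_append, h, hw]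

end ListLemmas

theorem exists_pos_le_one_forall_pos_add_mul {ι 𝕜 : Type*} [Finite ι] [Field 𝕜] [LinearOrder 𝕜]
    [IsStrictOrderedRing 𝕜] (x l : ι → 𝕜) :
    ∃ α : 𝕜, 0 < α ∧ α ≤ 1 ∧ ∀ i, 0 < x i → 0 < x i + α * l i := by
  obtain ⟨ε, hε, hlt⟩ := Pi.exists_forall_pos_add_lt (ι := {i // 0 < x i}) (x := 0)
    (y := fun i => x i / (|l i| + 1)) fun i => div_pos i.2 (by positivity)
  have hα : 0 < min ε 1 := lt_min hε one_pos
  refine ⟨min ε 1, hα, min_le_right _ _, fun i hi => ?_⟩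
  have hαi : min ε 1 < x i / (|l i| + 1) :=
    (min_le_left _ _).trans_lt (by simpa only [Pi.zero_apply, zero_add] using hlt ⟨i, hi⟩)
  rw [lt_div_iff₀ (by positivity)] at hαi
  nlinarith [neg_abs_le (l i)]

section SimplePath

variable {Q : Type} {p q u v : Q} {π ρ : List (Q × Q)}

theorem simplePath_nil (p : Q) : SimplePath p [] :=
  List.nodup_singleton p

theorem simplePath_concat :
    SimplePath p (π ++ [(u, v)]) ↔ SimplePath p π ∧ v ∉ pathStates p π := by
  have hstates : pathStates p (π ++ [(u, v)]) = pathStates p π ++ [v] := by simp [pathStates]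
  rw [SimplePath, hstates, ← List.concat_eq_append, List.nodup_concat, SimplePath, and_comm]

theorem SimplePath.of_append_left (h : SimplePath p (π ++ ρ)) : SimplePath p π := by
  rw [SimplePath, pathStates, List.map_append] at h
  exact h.of_append_left

theorem SimplePath.simpleCycle_concat (h : SimplePath p π) (u : Q) :
    SimpleCycle (π ++ [(u, p)]) := by
  refine ⟨List.concat_ne_nil _ _, ?_⟩
  rw [List.map_append]
  exact List.nodup_append_comm.1 h

end SimplePath

theorem lpsConcat_snoc {Q : Type} {n : ℕ} (πs : Fin (n + 1) → List (Q × Q))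
    (χs : Fin n → List (Q × Q)) (ks : Fin (n + 1) → ℕ) (χ π : List (Q × Q)) :
    lpsConcat (Fin.snoc πs π : Fin (n + 2) → List (Q × Q)) (Fin.snoc χs χ) ks =
      lpsConcat πs χs (Fin.init ks) ++ (List.replicate (ks (Fin.last n)) χ).flatten ++ π := by
  have h0 : (Fin.snoc πs π : Fin (n + 2) → List (Q × Q)) 0 = πs 0 :=
    Fin.snoc_castSucc (α := fun _ => List (Q × Q)) π πs 0
  simp only [lpsConcat, List.ofFn_succ_last, h0, List.flatten_append,
    List.flatten_singleton, Fin.succ_castSucc, Fin.succ_last, Fin.snoc_castSucc, Fin.snoc_last,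
    Fin.init, List.append_assoc]

namespace CVASS

variable {d : ℕ} {V : CVASS d} {p q r u v : V.Q} {x y : Fin d → ℚ} {π ρ τ : List (V.Q × V.Q)}

section Paths

theorem pathFrom_append :
    V.PathFrom p (π ++ ρ) q ↔ ∃ v, V.PathFrom p π v ∧ V.PathFrom v ρ q := by
  constructor
  · intro h
    induction π generalizing p with
    | nil => exact ⟨p, .nil p, h⟩
    | cons t π ih =>
      cases h with
      | cons ht h =>
        obtain ⟨v, hπ, hρ⟩ := ih h
        exact ⟨v, .cons ht hπ, hρ⟩
  · rintro ⟨v, hπ, hρ⟩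
    induction hπ with
    | nil => exact hρ
    | cons ht _ ih => exact .cons ht (ih hρ)

theorem PathFrom.append (hπ : V.PathFrom p π v) (hρ : V.PathFrom v ρ q) :
    V.PathFrom p (π ++ ρ) q :=
  pathFrom_append.2 ⟨v, hπ, hρ⟩

theorem pathFrom_singleton (h : (u, v) ∈ V.T) : V.PathFrom u [(u, v)] v :=
  .cons h (.nil v)

theorem PathFrom.toFinset_subset (h : V.PathFrom p π q) : π.toFinset ⊆ V.T := by
  induction h with
  | nil => exact Finset.empty_subset _
  | cons ht _ ih =>
    rw [List.toFinset_cons]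
    exact Finset.insert_subset ht ih

theorem PathFrom.exists_append_of_mem_pathStates (h : V.PathFrom p π q)
    (hv : v ∈ pathStates p π) : ∃ a c, π = a ++ c ∧ V.PathFrom p a v ∧ V.PathFrom v c q := by
  induction h with
  | nil p =>
    obtain rfl : v = p := List.mem_singleton.1 hv
    exact ⟨[], [], rfl, .nil v, .nil v⟩
  | @cons p r q π ht h ih =>
    rcases List.mem_cons.1 hv with rfl | hv
    · exact ⟨[], _, rfl, .nil v, .cons ht h⟩
    · obtain ⟨a, c, rfl, ha, hc⟩ := ih hv
      exact ⟨(p, r) :: a, c, rfl, .cons ht ha, hc⟩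

theorem PathFrom.simplePath_of_append (hπ : V.PathFrom p π v) (h : SimplePath p (π ++ ρ)) :
    SimplePath v ρ := by
  induction hπ with
  | nil => exact h
  | cons _ _ ih => exact ih (List.nodup_cons.1 h).2

end Paths

section Enabled

variable {A : Set (Fin d)}

/-- Sign abstraction of nonnegative runs: `A` is the set of counters known to be positive, and a
transition is enabled if it only decreases counters of `A`. The counters that it increases then join
`A`, and none leaves, since coefficients can be taken small. -/
def Enabled (V : CVASS d) : Set (Fin d) → List (V.Q × V.Q) → Prop
  | _, [] => True
  | A, t :: π => {i | V.label t i < 0} ⊆ A ∧ Enabled V (A ∪ {i | 0 < V.label t i}) π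

/-- The counters increased by some transition of the path. -/
def increased (V : CVASS d) (π : List (V.Q × V.Q)) : Set (Fin d) :=
  {i | ∃ t ∈ π, 0 < V.label t i}

theorem increased_mono (h : π ⊆ ρ) : V.increased π ⊆ V.increased ρ :=
  fun _ ⟨t, ht, hi⟩ => ⟨t, h ht, hi⟩

theorem increased_cons (t : V.Q × V.Q) (π : List (V.Q × V.Q)) :
    V.increased (t :: π) = {i | 0 < V.label t i} ∪ V.increased π := by
  ext i
  exact List.exists_mem_cons_iff _ _ _

theorem enabled_append :
    V.Enabled A (π ++ ρ) ↔ V.Enabled A π ∧ V.Enabled (A ∪ V.increased π) ρ := by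
  induction π generalizing A with
  | nil => simp [Enabled, increased]
  | cons t π ih =>
    rw [List.cons_append, Enabled, ih, Enabled, increased_cons, and_assoc, Set.union_assoc]

theorem enabled_concat {t : V.Q × V.Q} :
    V.Enabled A (π ++ [t]) ↔ V.Enabled A π ∧ {i | V.label t i < 0} ⊆ A ∪ V.increased π := by
  rw [enabled_append, Enabled, Enabled, and_true]

theorem Enabled.decreased_subset (h : V.Enabled A π) {t : V.Q × V.Q} (ht : t ∈ π) :
    {i | V.label t i < 0} ⊆ A ∪ V.increased π := by
  obtain ⟨u, v, rfl⟩ := List.append_of_mem ht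
  have hdec : {i | V.label t i < 0} ⊆ A ∪ V.increased u := (enabled_append.1 h).2.1
  exact hdec.trans (Set.union_subset_union_right A (increased_mono (List.subset_append_left u _)))

theorem enabled_eraseDups : V.Enabled A π.eraseDups ↔ V.Enabled A π := by
  induction π using List.reverseRecOn with
  | nil => rfl
  | append_singleton π t ih =>
    by_cases ht : t ∈ π
    · rw [eraseDups_append_of_subset (by simpa using ht : [t] ⊆ π), ih, enabled_concat]
      exact ⟨fun h => ⟨h, h.decreased_subset ht⟩, And.left⟩
    · have hinc : V.increased π.eraseDups = V.increased π := by
        ext i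
        simp only [increased, List.mem_eraseDups]
      rw [eraseDups_concat_of_notMem ht, enabled_concat, enabled_concat, ih, hinc]

theorem NNRunFrom.pathFrom (h : V.NNRunFrom p x π q y) : V.PathFrom p π q := by
  induction h with
  | nil p => exact .nil p
  | cons ht _ _ _ _ ih => exact .cons ht ih

theorem NNRunFrom.start_nonneg (h : V.NNRunFrom p x π q y) : ∀ i, 0 ≤ x i := by
  cases h <;> assumption

theorem NNRunFrom.end_nonneg (h : V.NNRunFrom p x π q y) : ∀ i, 0 ≤ y i := by
  induction h <;> assumption

theorem NNRunFrom.enabled (h : V.NNRunFrom p x π q y) (hA : {i | 0 < x i} ⊆ A) :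
    V.Enabled A π := by
  induction h generalizing A with
  | nil => trivial
  | @cons p q r x y α π _ _ hα _ h ih =>
    refine ⟨fun i hi => hA ?_, ih fun i hi => ?_⟩
    · have hnext : 0 ≤ x i + α * V.label (p, q) i := h.start_nonneg i
      have hdec : α * V.label (p, q) i < 0 := mul_neg_of_pos_of_neg hα hi
      exact lt_of_lt_of_le (neg_pos.2 hdec) (neg_le_iff_add_nonneg.2 hnext)
    · have hnext : 0 < x i + α * V.label (p, q) i := hi
      by_contra hmem
      have hxi : x i ≤ 0 := not_lt.1 fun hpos => hmem (.inl (hA hpos))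
      have hli : V.label (p, q) i ≤ 0 := not_lt.1 fun hpos => hmem (.inr hpos)
      nlinarith [mul_nonpos_of_nonneg_of_nonpos hα.le hli]

theorem PathFrom.exists_nnRunFrom (h : V.PathFrom p π q) (hx : ∀ i, 0 ≤ x i)
    (hA : A ⊆ {i | 0 < x i}) (hen : V.Enabled A π) : ∃ y, V.NNRunFrom p x π q y := by
  induction h generalizing x A with
  | nil p => exact ⟨x, .nil p x hx⟩
  | @cons p q r π ht _ ih =>
    obtain ⟨hdec, hen⟩ := hen
    obtain ⟨α, hα, hα_le, hpos⟩ := exists_pos_le_one_forall_pos_add_mul x (V.label (p, q))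
    have hnonneg (i) : 0 ≤ x i + α * V.label (p, q) i := by
      rcases lt_or_ge (V.label (p, q) i) 0 with hi | hi
      · exact (hpos i (hA (hdec hi))).le
      · exact add_nonneg (hx i) (mul_nonneg hα.le hi)
    have hsupport : A ∪ {i | 0 < V.label (p, q) i} ⊆ {i | 0 < x i + α * V.label (p, q) i} :=
      Set.union_subset (fun i hi => hpos i (hA hi))
        fun i hi => add_pos_of_nonneg_of_pos (hx i) (mul_pos hα hi)
    obtain ⟨y, hy⟩ := ih (x := x + α • V.label (p, q)) hnonneg hsupport hen
    exact ⟨y, .cons ht hx hα hα_le hy⟩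

theorem NNRunFrom.exists_of_eraseDups_eq (hπ : V.NNRunFrom p x π q y) (hτ : V.PathFrom p τ r)
    (h : τ.eraseDups = π.eraseDups) : ∃ y', V.NNRunFrom p x τ r y' := by
  refine hτ.exists_nnRunFrom hπ.start_nonneg subset_rfl ?_
  rw [← enabled_eraseDups, h, enabled_eraseDups]
  exact hπ.enabled subset_rfl

end Enabled

section FreshUnrolling

variable {n : ℕ} {w : List (V.Q × V.Q)}

/-- `V.FreshPrefix p n w r`: the path `w`, from `p` to `r`, is `π₀χ₁π₁⋯πₙ₋₁χₙ` for simple paths `πᵢ`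
and simple cycles `χᵢ`, where each `χᵢ` has a transition that does not occur before it. -/
inductive FreshPrefix (V : CVASS d) (p : V.Q) : ℕ → List (V.Q × V.Q) → V.Q → Prop
  | nil : FreshPrefix V p 0 [] p
  | snoc {n : ℕ} {w P χ : List (V.Q × V.Q)} {r v : V.Q} :
      FreshPrefix V p n w r → V.PathFrom r P v → SimplePath r P →
      V.PathFrom v χ v → SimpleCycle χ → ¬ χ ⊆ w ++ P →
      FreshPrefix V p (n + 1) (w ++ P ++ χ) v

/-- `V.FreshUnrolling p n τ q`: the path `τ`, from `p` to `q`, traverses a linear path scheme with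
`n` simple cycles, each of them once and each with a transition that does not occur before it. -/
def FreshUnrolling (V : CVASS d) (p : V.Q) (n : ℕ) (τ : List (V.Q × V.Q)) (q : V.Q) : Prop :=
  ∃ w r P, V.FreshPrefix p n w r ∧ V.PathFrom r P q ∧ SimplePath r P ∧ τ = w ++ P

theorem FreshPrefix.pathFrom (h : V.FreshPrefix p n w r) : V.PathFrom p w r := by
  induction h with
  | nil => exact .nil p
  | snoc _ hP _ hχ _ _ ih => exact (ih.append hP).append hχ

theorem FreshPrefix.le_card (h : V.FreshPrefix p n w r) : n ≤ w.toFinset.card := by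
  induction h with
  | nil => exact Nat.zero_le _
  | @snoc n w P χ _ _ _ _ _ _ _ hfresh ih =>
    obtain ⟨t, htχ, ht⟩ : ∃ t ∈ χ, t ∉ w ++ P := by
      simpa only [List.subset_def, not_forall, exists_prop] using hfresh
    refine ih.trans_lt (Finset.card_lt_card ((Finset.ssubset_iff_of_subset ?_).2 ⟨t, ?_, ?_⟩))
    · rw [List.append_assoc, List.toFinset_append]
      exact Finset.subset_union_left
    · exact List.mem_toFinset.2 (List.mem_append_right _ htχ)
    · exact fun htw => ht (List.mem_append_left _ (List.mem_toFinset.1 htw))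

theorem FreshUnrolling.pathFrom (h : V.FreshUnrolling p n τ q) : V.PathFrom p τ q := by
  obtain ⟨w, r, P, hw, hP, -, rfl⟩ := h
  exact hw.pathFrom.append hP

theorem FreshUnrolling.le_card (h : V.FreshUnrolling p n τ q) : n ≤ τ.toFinset.card := by
  obtain ⟨w, r, P, hw, -, -, rfl⟩ := h
  refine hw.le_card.trans (Finset.card_le_card ?_)
  rw [List.toFinset_append]
  exact Finset.subset_union_left

theorem FreshUnrolling.nil (p : V.Q) : V.FreshUnrolling p 0 [] p :=
  ⟨[], p, [], .nil, .nil p, simplePath_nil p, rfl⟩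

theorem FreshUnrolling.exists_concat (h : V.FreshUnrolling p n τ u) (ht : (u, q) ∈ V.T) :
    ∃ n' τ', V.FreshUnrolling p n' τ' q ∧ τ'.eraseDups = (τ ++ [(u, q)]).eraseDups := by
  obtain ⟨w, r, P, hw, hP, hPs, rfl⟩ := h
  by_cases hq : q ∈ pathStates r P
  · obtain ⟨a, c, rfl, ha, hc⟩ := hP.exists_append_of_mem_pathStates hq
    have hsimple : SimplePath r a := hPs.of_append_left
    have hχ : V.PathFrom q (c ++ [(u, q)]) q := hc.append (pathFrom_singleton ht)
    have hχs : SimpleCycle (c ++ [(u, q)]) := (ha.simplePath_of_append hPs).simpleCycle_concat u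
    have hassoc : w ++ (a ++ c) ++ [(u, q)] = w ++ a ++ (c ++ [(u, q)]) := by
      simp only [List.append_assoc]
    rw [hassoc]
    by_cases hold : c ++ [(u, q)] ⊆ w ++ a
    · exact ⟨n, w ++ a, ⟨w, r, a, hw, ha, hsimple, rfl⟩, (eraseDups_append_of_subset hold).symm⟩
    · exact ⟨n + 1, _, ⟨_, q, [], hw.snoc ha hsimple hχ hχs hold, .nil q, simplePath_nil q,
        (List.append_nil _).symm⟩, rfl⟩
  · exact ⟨n, _, ⟨w, r, P ++ [(u, q)], hw, hP.append (pathFrom_singleton ht),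
      simplePath_concat.2 ⟨hPs, hq⟩, List.append_assoc _ _ _⟩, rfl⟩

theorem PathFrom.exists_freshUnrolling (h : V.PathFrom p π q) :
    ∃ n τ, V.FreshUnrolling p n τ q ∧ τ.eraseDups = π.eraseDups := by
  induction π using List.reverseRecOn generalizing q with
  | nil =>
    cases h
    exact ⟨0, [], .nil p, rfl⟩
  | append_singleton π t ih =>
    obtain ⟨u, hπ, ht⟩ := pathFrom_append.1 h
    obtain ⟨n, τ, hτ, hτπ⟩ := ih hπ
    obtain _ | ⟨ht, ⟨⟩⟩ := ht
    obtain ⟨n', τ', hτ', hτ'τ⟩ := hτ.exists_concat ht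
    exact ⟨n', τ', hτ', hτ'τ.trans (eraseDups_append_congr_left hτπ _)⟩

end FreshUnrolling

section LinearPathScheme

variable {n : ℕ} {s : Fin (n + 2) → V.Q} {πs : Fin (n + 1) → List (V.Q × V.Q)}
  {χs : Fin n → List (V.Q × V.Q)} {w P χ : List (V.Q × V.Q)}

/-- `V.IsSimpleLPS p q s πs χs`: the simple paths `πs` and the simple cycles `χs` form a linear path
scheme from `p` to `q`. The path `πs i` leads from the state `s i` to `s (i + 1)`, and for `i < n`
the cycle `χs i` is based at `s (i + 1)`. -/
structure IsSimpleLPS (V : CVASS d) (p q : V.Q) {n : ℕ} (s : Fin (n + 2) → V.Q)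
    (πs : Fin (n + 1) → List (V.Q × V.Q)) (χs : Fin n → List (V.Q × V.Q)) : Prop where
  start_eq : s 0 = p
  end_eq : s (Fin.last (n + 1)) = q
  pathFrom : ∀ i : Fin (n + 1), V.PathFrom (s i.castSucc) (πs i) (s i.succ)
  simplePath : ∀ i : Fin (n + 1), SimplePath (s i.castSucc) (πs i)
  cycleFrom : ∀ i : Fin n, V.PathFrom (s i.succ.castSucc) (χs i) (s i.succ.castSucc)
  simpleCycle : ∀ i : Fin n, SimpleCycle (χs i)

theorem isSimpleLPS_of_simplePath (hP : V.PathFrom p P q) (hPs : SimplePath p P) :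
    V.IsSimpleLPS p q ![p, q] ![P] ![] where
  start_eq := rfl
  end_eq := rfl
  pathFrom := Fin.forall_fin_one.2 hP
  simplePath := Fin.forall_fin_one.2 hPs
  cycleFrom := finZeroElim
  simpleCycle := finZeroElim

theorem IsSimpleLPS.snoc (h : V.IsSimpleLPS p v s πs χs) (hχ : V.PathFrom v χ v)
    (hχs : SimpleCycle χ) (hP : V.PathFrom v P q) (hPs : SimplePath v P) :
    V.IsSimpleLPS p q (Fin.snoc s q : Fin (n + 3) → V.Q)
      (Fin.snoc πs P : Fin (n + 2) → List (V.Q × V.Q)) (Fin.snoc χs χ) := by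
  obtain rfl := h.end_eq
  refine ⟨?_, Fin.snoc_last _ _, Fin.lastCases ?_ fun i => ?_, Fin.lastCases ?_ fun i => ?_,
    Fin.lastCases ?_ fun i => ?_, Fin.lastCases ?_ fun i => ?_⟩
  · rw [← h.start_eq]
    exact Fin.snoc_castSucc (α := fun _ => V.Q) q s 0
  · simpa only [Fin.succ_castSucc, Fin.succ_last, Fin.snoc_castSucc, Fin.snoc_last] using hP
  · simpa only [Fin.succ_castSucc, Fin.succ_last, Fin.snoc_castSucc, Fin.snoc_last] using
      h.pathFrom i
  · simpa only [Fin.succ_castSucc, Fin.succ_last, Fin.snoc_castSucc, Fin.snoc_last] using hPs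
  · simpa only [Fin.succ_castSucc, Fin.succ_last, Fin.snoc_castSucc, Fin.snoc_last] using
      h.simplePath i
  · simpa only [Fin.succ_castSucc, Fin.succ_last, Fin.snoc_castSucc, Fin.snoc_last] using hχ
  · simpa only [Fin.succ_castSucc, Fin.succ_last, Fin.snoc_castSucc, Fin.snoc_last] using
      h.cycleFrom i
  · simpa only [Fin.succ_castSucc, Fin.succ_last, Fin.snoc_castSucc, Fin.snoc_last] using hχs
  · simpa only [Fin.succ_castSucc, Fin.succ_last, Fin.snoc_castSucc, Fin.snoc_last] using
      h.simpleCycle i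

theorem FreshPrefix.exists_isSimpleLPS (hw : V.FreshPrefix p n w r) (hP : V.PathFrom r P q)
    (hPs : SimplePath r P) :
    ∃ (s : Fin (n + 2) → V.Q) (πs : Fin (n + 1) → List (V.Q × V.Q))
      (χs : Fin n → List (V.Q × V.Q)),
      V.IsSimpleLPS p q s πs χs ∧ lpsConcat πs χs 1 = w ++ P := by
  induction hw generalizing P q with
  | nil => exact ⟨_, _, _, isSimpleLPS_of_simplePath hP hPs, by simp [lpsConcat]⟩
  | @snoc n _ _ _ _ _ _ hP' hPs' hχ hχs _ ih =>
    obtain ⟨s, πs, χs, hlps, hword⟩ := ih hP' hPs'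
    refine ⟨_, _, _, hlps.snoc hχ hχs hP hPs, ?_⟩
    have hinit : Fin.init (1 : Fin (n + 1) → ℕ) = 1 := rfl
    rw [lpsConcat_snoc, hinit, hword, Pi.one_apply, List.replicate_one, List.flatten_singleton]

theorem FreshUnrolling.exists_isSimpleLPS (h : V.FreshUnrolling p n τ q) :
    ∃ (s : Fin (n + 2) → V.Q) (πs : Fin (n + 1) → List (V.Q × V.Q))
      (χs : Fin n → List (V.Q × V.Q)),
      V.IsSimpleLPS p q s πs χs ∧ lpsConcat πs χs 1 = τ := by
  obtain ⟨w, r, P, hw, hP, hPs, rfl⟩ := h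
  exact hw.exists_isSimpleLPS hP hPs

end LinearPathScheme

end CVASS

theorem short_covering_lps_nonneg_general {d : ℕ} {V : CVASS d} {p q : V.Q} {x y : Fin d → ℚ}
    {π : List (V.Q × V.Q)} (hrun : V.NNRunFrom p x π q y) :
    ∃ (n : ℕ) (s : Fin (n + 2) → V.Q) (πs : Fin (n + 1) → List (V.Q × V.Q))
      (χs : Fin n → List (V.Q × V.Q)),
      n ≤ π.toFinset.card ∧ V.IsSimpleLPS p q s πs χs ∧
      (∀ t : V.Q × V.Q, t ∈ π ↔ t ∈ lpsConcat πs χs 1) ∧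
      ∃ y' : Fin d → ℚ, V.NNRunFrom p x (lpsConcat πs χs 1) q y' := by
  obtain ⟨n, τ, hτ, hτπ⟩ := hrun.pathFrom.exists_freshUnrolling
  obtain ⟨s, πs, χs, hlps, rfl⟩ := hτ.exists_isSimpleLPS
  have hsupport := mem_iff_of_eraseDups_eq hτπ.symm
  have hcard : n ≤ π.toFinset.card := by
    rw [List.toFinset.ext hsupport]
    exact hτ.le_card
  exact ⟨n, s, πs, χs, hcard, hlps, hsupport, hrun.exists_of_eraseDups_eq hτ.pathFrom hτπ⟩

/-- short covering LPS for nonnegative runs.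
If `p(x) →^π q(y)` in the nonnegative semantics, then there is a linear path
scheme `σ = π₀ χ₁* π₁ ⋯ χₙ* πₙ` from `p` to `q` with `n ≤ |T| + d`, simple
paths and simple cycles, and some `y' ∈ ℚ≥0^d` and path `τ ∈ σ` with
`⟦π⟧ = ⟦τ⟧` and `p(x) →^τ q(y')` in the nonnegative semantics. -/
theorem short_covering_lps_nonneg {d : ℕ} (V : CVASS d) (p q : V.Q)
    (x y : Fin d → ℚ) (hx : ∀ i, 0 ≤ x i) (hy : ∀ i, 0 ≤ y i)
    (π : List (V.Q × V.Q)) (hπ : V.PathFrom p π q)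
    (hrun : V.NNRunFrom p x π q y) :
    ∃ (n : ℕ) (s : Fin (n + 2) → V.Q) (πs : Fin (n + 1) → List (V.Q × V.Q))
      (χs : Fin n → List (V.Q × V.Q)),
      n ≤ V.T.card + d ∧
      s 0 = p ∧ s (Fin.last (n + 1)) = q ∧
      (∀ i : Fin (n + 1), V.PathFrom (s i.castSucc) (πs i) (s i.succ)) ∧
      (∀ i : Fin (n + 1), SimplePath (s i.castSucc) (πs i)) ∧
      (∀ i : Fin n, V.PathFrom (s i.succ.castSucc) (χs i) (s i.succ.castSucc)) ∧
      (∀ i : Fin n, SimpleCycle (χs i)) ∧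
      ∃ (y' : Fin d → ℚ) (ks : Fin n → ℕ),
        (∀ i, 0 ≤ y' i) ∧
        (∀ t : V.Q × V.Q, t ∈ π ↔ t ∈ lpsConcat πs χs ks) ∧
        V.NNRunFrom p x (lpsConcat πs χs ks) q y' := by
  obtain ⟨n, s, πs, χs, hn, hlps, hsupport, y', hy'⟩ := short_covering_lps_nonneg_general hrun
  exact ⟨n, s, πs, χs, (hn.trans (Finset.card_le_card hπ.toFinset_subset)).trans
    (Nat.le_add_right _ _), hlps.start_eq, hlps.end_eq, hlps.pathFrom, hlps.simplePath,
    hlps.cycleFrom, hlps.simpleCycle, y', 1, hy'.end_nonneg, hsupport, hy'⟩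
end
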